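/- Let W be a complex vector space, let V_ℝ ⊆ W be a real subspace, and set V_ℂ := {v ∈ V_ℝ | i • v ∈ V_ℝ} and V := span_ℂ(V_ℝ) ⊆ W. Then V_ℂ is a complex subspace of W contained in V_ℝ, and the canonical ℂ-linear map ℂ ⊗[ℝ] (V_ℝ / V_ℂ) → V / V_ℂ (induced by z ⊗ [v] ↦ [z • v]) is bijective. In other words, (V, V_ℝ, V_ℂ) is a general mixed super vector space. -/

import Mathlib

open TensorProduct

/-!
Let `S` be an `R`-algebra spanned as an `R`-module by `1` and `ω`, such as `ℂ` over `ℝ` with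
`ω = i`. Every element of `S ⊗[R] M` can be written `1 ⊗ x + ω ⊗ y`, and the `S`-linear extension
of `f : M → N` sends it to `f x + ω • f y`. If this vanishes, then `ω • f y` lies in the range of
`f`, so the extension is injective as soon as `ω • f y ∈ range f` forces `y = 0` (a condition that
contains the injectivity of `f`, since `0 ∈ range f`). With `V_S` the largest `S`-submodule of `V`,
the canonical map `f : V / V_S → span S V / V_S` satisfies it because `v ∈ V_S` as soon as `v` and
`ω • v` both lie in `V`. Surjectivity holds because the range of the extension is the `S`-span of
the range of `f`.
-/

open Submodule

theorem exists_eq_tmul_add_tmul_of_span_pair_eq_top {R M N : Type*} [CommSemiring R]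
    [AddCommMonoid M] [AddCommMonoid N] [Module R M] [Module R N] {a b : M}
    (hab : span R {a, b} = ⊤) (t : M ⊗[R] N) : ∃ x y : N, t = a ⊗ₜ[R] x + b ⊗ₜ[R] y := by
  induction t with
  | zero => exact ⟨0, 0, by simp⟩
  | tmul m n =>
    obtain ⟨r, s, rfl⟩ := mem_span_pair.mp (hab ▸ mem_top : m ∈ span R {a, b})
    exact ⟨r • n, s • n, by rw [add_tmul, smul_tmul, smul_tmul]⟩
  | add t t' ht ht' =>
    obtain ⟨x, y, rfl⟩ := ht
    obtain ⟨x', y', rfl⟩ := ht'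
    exact ⟨x + x', y + y', by rw [tmul_add, tmul_add, add_add_add_comm]⟩

theorem liftBaseChange_injective_of_smul_mem_range {R S M N : Type*} [CommSemiring R] [CommRing S]
    [Algebra R S] [AddCommGroup M] [AddCommGroup N] [Module R M] [Module R N] [Module S N]
    [IsScalarTower R S N] {ω : S} (hω : span R {1, ω} = ⊤) {f : M →ₗ[R] N}
    (hf : ∀ y, ω • f y ∈ LinearMap.range f → y = 0) :
    Function.Injective (f.liftBaseChange S) := by
  rw [injective_iff_map_eq_zero]
  intro t ht
  obtain ⟨x, y, rfl⟩ := exists_eq_tmul_add_tmul_of_span_pair_eq_top hω t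
  have hxy : f x + ω • f y = 0 := by
    simpa only [map_add, LinearMap.liftBaseChange_tmul, one_smul] using ht
  have hy : y = 0 := hf y ⟨-x, by rw [map_neg, neg_eq_of_add_eq_zero_right hxy]⟩
  have hfx : f x = 0 := by simpa only [hy, map_zero, smul_zero, add_zero] using hxy
  have hx : x = 0 := hf x (by simp only [hfx, smul_zero, zero_mem])
  rw [hx, hy, tmul_zero, tmul_zero, add_zero]

section ScalarCore

variable {R : Type*} (S : Type*) {W : Type*} [Semiring R] [Semiring S] [AddCommMonoid W]
  [Module R W] [Module S W]

/-- The largest `S`-submodule contained in the `R`-submodule `V`. For a real subspace `V` of a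
complex vector space and `S = ℂ` this is `V_ℂ`. -/
def scalarCore (V : Submodule R W) : Submodule S W where
  carrier := {v | ∀ s : S, s • v ∈ V}
  add_mem' hv hw s := by rw [smul_add]; exact V.add_mem (hv s) (hw s)
  zero_mem' s := by rw [smul_zero]; exact V.zero_mem
  smul_mem' t v hv s := by rw [smul_smul]; exact hv (s * t)

variable {S} [Module R S] [IsScalarTower R S W] {ω : S}

theorem smul_mem_of_span_one_pair_eq_top (hω : span R {1, ω} = ⊤) {V : Submodule R W} {v : W}
    (hv : v ∈ V) (hωv : ω • v ∈ V) (s : S) : s • v ∈ V := by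
  obtain ⟨a, b, rfl⟩ := mem_span_pair.mp (hω ▸ mem_top : s ∈ span R {1, ω})
  rw [add_smul, smul_assoc, smul_assoc, one_smul]
  exact V.add_mem (V.smul_mem a hv) (V.smul_mem b hωv)

theorem mem_scalarCore_iff (hω : span R {1, ω} = ⊤) {V : Submodule R W} {v : W} :
    v ∈ scalarCore S V ↔ v ∈ V ∧ ω • v ∈ V :=
  ⟨fun hv => ⟨one_smul S v ▸ hv 1, hv ω⟩, fun hv => smul_mem_of_span_one_pair_eq_top hω hv.1 hv.2⟩

end ScalarCore

section QuotientToSpan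

variable {R S W : Type*} [Ring R] [Ring S] [Module R S] [AddCommGroup W] [Module R W]
  [Module S W] [IsScalarTower R S W]

/-- The canonical map `V / (V ∩ U) → span S V / (span S V ∩ U)` induced by the inclusion of the
`R`-submodule `V` in its `S`-span. The intersections are encoded as preimages under the inclusions
into `W`, so that `U` need not be contained in `V`. -/
def quotientToSpan (V : Submodule R W) (U : Submodule S W) :
    (V ⧸ (U.restrictScalars R).comap V.subtype) →ₗ[R]
      (span S (V : Set W) ⧸ U.comap (span S (V : Set W)).subtype) :=
  liftQ _
    (((U.comap (span S (V : Set W)).subtype).mkQ.restrictScalars R).comp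
      (((restrictScalarsEquiv R S W (span S (V : Set W))).toLinearMap.restrictScalars R).comp
        (inclusion (fun _ hx => subset_span hx : V ≤ (span S (V : Set W)).restrictScalars R))))
    (fun _ hx => LinearMap.mem_ker.mpr ((Submodule.Quotient.mk_eq_zero _).mpr hx))

theorem quotientToSpan_mk (V : Submodule R W) (U : Submodule S W) (v : V) :
    quotientToSpan V U (Submodule.Quotient.mk v) =
      Submodule.Quotient.mk ⟨v, subset_span v.2⟩ :=
  rfl

theorem span_range_quotientToSpan (V : Submodule R W) (U : Submodule S W) :
    span S (LinearMap.range (quotientToSpan V U) :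
      Set (span S (V : Set W) ⧸ U.comap (span S (V : Set W)).subtype)) = ⊤ := by
  have generators_mem_range :
      (U.comap (span S (V : Set W)).subtype).mkQ '' ((↑) ⁻¹' (V : Set W)) ⊆
        LinearMap.range (quotientToSpan V U) := by
    rintro _ ⟨w, hw, rfl⟩
    exact ⟨Submodule.Quotient.mk ⟨w, hw⟩, rfl⟩
  rw [eq_top_iff, ← range_mkQ, LinearMap.range_eq_map, ← span_span_coe_preimage, map_span]
  exact span_mono generators_mem_range

theorem eq_zero_of_smul_mem_range_quotientToSpan_scalarCore {ω : S} (hω : span R {1, ω} = ⊤)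
    {V : Submodule R W} (y : V ⧸ ((scalarCore S V).restrictScalars R).comap V.subtype)
    (hy : ω • quotientToSpan V (scalarCore S V) y ∈
      LinearMap.range (quotientToSpan V (scalarCore S V))) : y = 0 := by
  obtain ⟨v, rfl⟩ := Submodule.Quotient.mk_surjective _ y
  obtain ⟨x, hx⟩ := hy
  obtain ⟨u, rfl⟩ := Submodule.Quotient.mk_surjective _ x
  rw [quotientToSpan_mk, quotientToSpan_mk, ← Submodule.Quotient.mk_smul,
    Submodule.Quotient.eq] at hx
  have sub_mem_core : (u : W) - ω • (v : W) ∈ scalarCore S V := hx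
  have smul_mem : ω • (v : W) ∈ V :=
    (V.sub_mem_iff_right u.2).mp ((mem_scalarCore_iff hω).mp sub_mem_core).1
  have mem_core : (v : W) ∈ scalarCore S V := (mem_scalarCore_iff hω).mpr ⟨v.2, smul_mem⟩
  exact (Submodule.Quotient.mk_eq_zero _).mpr mem_core

end QuotientToSpan

section Bijectivity

variable {R S W : Type*} [CommRing R] [CommRing S] [Algebra R S] [AddCommGroup W] [Module R W]
  [Module S W] [IsScalarTower R S W]

theorem liftBaseChange_quotientToSpan_surjective (V : Submodule R W) (U : Submodule S W) :
    Function.Surjective ((quotientToSpan V U).liftBaseChange S) := by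
  rw [← LinearMap.range_eq_top, LinearMap.range_liftBaseChange, span_range_quotientToSpan]

theorem liftBaseChange_quotientToSpan_scalarCore_bijective {ω : S} (hω : span R {1, ω} = ⊤)
    (V : Submodule R W) :
    Function.Bijective ((quotientToSpan V (scalarCore S V)).liftBaseChange S) :=
  ⟨liftBaseChange_injective_of_smul_mem_range hω
    (eq_zero_of_smul_mem_range_quotientToSpan_scalarCore hω),
    liftBaseChange_quotientToSpan_surjective V _⟩

end Bijectivity

theorem stmt_2_general {R S : Type*} [CommRing R] [CommRing S] [Algebra R S] {ω : S}
    (hω : span R {1, ω} = ⊤) (W : Type*) [AddCommGroup W] [Module R W] [Module S W]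
    [IsScalarTower R S W] (V : Submodule R W) :
    {v : W | v ∈ V ∧ ω • v ∈ V} ⊆ (V : Set W) ∧
    (∃ U : Submodule S W, (U : Set W) = {v : W | v ∈ V ∧ ω • v ∈ V}) ∧
    (∀ U : Submodule S W, (U : Set W) = {v : W | v ∈ V ∧ ω • v ∈ V} →
      Function.Bijective ((quotientToSpan V U).liftBaseChange S)) := by
  have coe_core : (scalarCore S V : Set W) = {v : W | v ∈ V ∧ ω • v ∈ V} :=
    Set.ext fun _ => mem_scalarCore_iff hω
  refine ⟨fun _ hv => hv.1, ⟨scalarCore S V, coe_core⟩, fun U hU => ?_⟩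
  obtain rfl : U = scalarCore S V := SetLike.coe_injective (hU.trans coe_core.symm)
  exact liftBaseChange_quotientToSpan_scalarCore_bijective hω V

/-- For a complex vector space `W` and a real subspace `V_ℝ ⊆ W`, set
`V_ℂ := {v ∈ V_ℝ | i • v ∈ V_ℝ}` and `V := span_ℂ(V_ℝ)`.  Then `V_ℂ` is a complex
subspace of `W` contained in `V_ℝ`, and the canonical ℂ-linear map
`ℂ ⊗[ℝ] (V_ℝ / V_ℂ) → V / V_ℂ` (`z ⊗ [v] ↦ [z • v]`) is bijective; i.e.
`(V, V_ℝ, V_ℂ)` is a general mixed super vector space. -/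
theorem stmt_2 (W : Type*) [AddCommGroup W] [Module ℝ W] [Module ℂ W]
    [IsScalarTower ℝ ℂ W] (Vr : Submodule ℝ W) :
    {v : W | v ∈ Vr ∧ Complex.I • v ∈ Vr} ⊆ (Vr : Set W) ∧
    (∃ Vc : Submodule ℂ W, (Vc : Set W) = {v : W | v ∈ Vr ∧ Complex.I • v ∈ Vr}) ∧
    (∀ Vc : Submodule ℂ W, (Vc : Set W) = {v : W | v ∈ Vr ∧ Complex.I • v ∈ Vr} →
      Function.Bijective
        (LinearMap.liftBaseChange ℂ
          (Submodule.liftQ ((Vc.restrictScalars ℝ).comap Vr.subtype)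
            ((((Vc.comap (Submodule.span ℂ (Vr : Set W)).subtype).mkQ).restrictScalars ℝ).comp
              (((Submodule.restrictScalarsEquiv ℝ ℂ W
                    (Submodule.span ℂ (Vr : Set W))).toLinearMap.restrictScalars ℝ).comp
                (Submodule.inclusion
                  (fun _ hx => Submodule.subset_span hx :
                    Vr ≤ (Submodule.span ℂ (Vr : Set W)).restrictScalars ℝ))))
            (fun x hx =>
              LinearMap.mem_ker.mpr ((Submodule.Quotient.mk_eq_zero _).mpr hx))))) :=
  stmt_2_general (RCLike.span_one_I ℂ) W Vr
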